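/- arXiv:1906.10722 — 3 statements merged into one kernel-verified Lean document; each statement's English description precedes it below -/
import Mathlib

section
/- Let T be the set of all tuples (b₁,…,b₆) ∈ ℤ⁶ with b₁, b₂, b₅, b₆ ≥ 2 such that the matrix M(b) is positive definite and det M(b) = 1. Then T has exactly 312 elements. Moreover, T is invariant under the group of order 8 generated by the three involutions (b₁,b₂,b₃,b₄,b₅,b₆) ↦ (b₂,b₁,b₃,b₄,b₅,b₆), (b₁,b₂,b₃,b₄,b₅,b₆) ↦ (b₁,b₂,b₃,b₄,b₆,b₅), and (b₁,b₂,b₃,b₄,b₅,b₆) ↦ (b₅,b₆,b₄,b₃,b₁,b₂), and under this action T decomposes into exactly 39 orbits. -/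
/-- The linking matrix of the `H`-graph: diagonal entries `b₁,…,b₆`, entries `-1`
in positions (1,3),(3,1),(2,3),(3,2),(3,4),(4,3),(4,5),(5,4),(4,6),(6,4)
(1-based indexing), and `0` elsewhere. -/
def Mb (b : Fin 6 → ℤ) : Matrix (Fin 6) (Fin 6) ℤ :=
  !![b 0,    0,   -1,    0,    0,    0;
        0, b 1,   -1,    0,    0,    0;
       -1,   -1, b 2,   -1,    0,    0;
        0,    0,   -1, b 3,   -1,   -1;
        0,    0,    0,   -1, b 4,    0;
        0,    0,    0,   -1,    0, b 5]

/-- The set of tuples `b ∈ ℤ⁶` with `b₁, b₂, b₅, b₆ ≥ 2` such that `M(b)` is positive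
definite and `det M(b) = 1`. -/
def Tset : Set (Fin 6 → ℤ) :=
  {b | 2 ≤ b 0 ∧ 2 ≤ b 1 ∧ 2 ≤ b 4 ∧ 2 ≤ b 5 ∧
    ((Mb b).map ((↑·) : ℤ → ℝ)).PosDef ∧ (Mb b).det = 1}

/-!
Let `P = b₁b₂b₃ - b₁ - b₂` and `Q = b₄b₅b₆ - b₅ - b₆` be the determinants of the two forks of the
`H`-graph. Then `det M(b) = PQ - b₁b₂b₅b₆`, and completing squares shows that `M(b)` is positive
definite as soon as the leaves, `P` and the determinant are positive. So `T` is the solution set of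
`PQ = b₁b₂b₅b₆ + 1` with `P > 0`, and it is invariant under the automorphism group of the `H`-graph,
which has order 8.

The two leaves on the same side are distinct, because a common value would divide `1`. Hence every
orbit contains a solution with `b₁ < b₂`, `b₅ < b₆`, `b₃ ≤ b₄`. Dividing the equation by
`b₁b₂b₅b₆` gives `(b₃ - 1/b₁ - 1/b₂)(b₄ - 1/b₅ - 1/b₆) = 1 + 1/(b₁b₂b₅b₆)`, which forces `b₃ = 1`
and bounds `b₄`, `b₁` and `b₅`. For fixed `b₁, b₃, b₄, b₅` the equation becomes a hyperbola in `b₂`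
and `b₆`, on which one coordinate is small, and a finite search gives 39 solutions. All of them
satisfy `b₃ < b₄`, so the group acts freely and `312 = 8 * 39`.
-/

/-- `N` is a strict fundamental domain for a free action of `G` on `T`: the set `T` is invariant,
`N` meets every orbit in `T`, and only `1` moves a point of `N` into `N`. The last condition says at
the same time that `N` meets each orbit only once and that stabilizers are trivial. -/
structure IsFreeTransversal (G : Type*) {X : Type*} [Group G] [MulAction G X] (T N : Set X) :
    Prop where
  subset : N ⊆ T
  smul_mem : ∀ g : G, ∀ x ∈ T, g • x ∈ T
  exists_smul_mem : ∀ x ∈ T, ∃ g : G, g • x ∈ N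
  eq_one_of_smul_mem : ∀ x ∈ N, ∀ g : G, g • x ∈ N → g = 1

namespace IsFreeTransversal

variable {G X : Type*} [Group G] [MulAction G X] {T N : Set X}

theorem smul_injOn (h : IsFreeTransversal G T N) :
    Set.InjOn (fun p : G × X => p.1 • p.2) (Set.univ ×ˢ N) := by
  rintro ⟨g, x⟩ ⟨-, hx⟩ ⟨k, y⟩ ⟨-, hy⟩ (hgk : g • x = k • y)
  have hxy : (k⁻¹ * g) • x = y := by rw [mul_smul, hgk, inv_smul_smul]
  have hone : k⁻¹ * g = 1 := h.eq_one_of_smul_mem x hx _ (hxy ▸ hy)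
  rw [hone, one_smul] at hxy
  rw [hxy, inv_mul_eq_one.mp hone]

theorem image_smul_eq (h : IsFreeTransversal G T N) :
    (fun p : G × X => p.1 • p.2) '' (Set.univ ×ˢ N) = T := by
  apply subset_antisymm
  · rintro _ ⟨⟨g, x⟩, ⟨-, hx⟩, rfl⟩
    exact h.smul_mem g x (h.subset hx)
  · intro x hx
    obtain ⟨g, hg⟩ := h.exists_smul_mem x hx
    exact ⟨(g⁻¹, g • x), ⟨trivial, hg⟩, inv_smul_smul g x⟩

theorem ncard_eq (h : IsFreeTransversal G T N) : T.ncard = Nat.card G * N.ncard := by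
  rw [← h.image_smul_eq, h.smul_injOn.ncard_image, Set.ncard_prod, Set.ncard_univ]

theorem ncard_image_orbit (h : IsFreeTransversal G T N) :
    (MulAction.orbit G '' T).ncard = N.ncard := by
  have himage : MulAction.orbit G '' T = MulAction.orbit G '' N := by
    refine subset_antisymm ?_ (Set.image_mono h.subset)
    rintro _ ⟨x, hx, rfl⟩
    obtain ⟨g, hg⟩ := h.exists_smul_mem x hx
    exact ⟨g • x, hg, MulAction.orbit_smul g x⟩
  have hinj : Set.InjOn (MulAction.orbit G) N := by
    intro x hx y hy hxy
    obtain ⟨g, rfl⟩ := MulAction.orbit_eq_iff.mp hxy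
    rw [h.eq_one_of_smul_mem y hy g hx]
    exact one_smul G y
  rw [himage, hinj.ncard_image]

end IsFreeTransversal

/-- The determinant of the fork with centre weight `c` and leaf weights `a`, `b`, i.e. of the matrix
`!![a, 0, -1; 0, b, -1; -1, -1, c]`, a principal minor of `M(b)`. -/
def forkDet (c a b : ℤ) : ℤ := a * b * c - a - b

theorem det_Mb (b : Fin 6 → ℤ) :
    (Mb b).det = forkDet (b 2) (b 0) (b 1) * forkDet (b 3) (b 4) (b 5)
      - b 0 * b 1 * b 4 * b 5 := by
  simp [Mb, forkDet, Matrix.det_succ_row_zero, Fin.sum_univ_succ, Fin.succAbove]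
  ring

theorem det_submatrix_Mb (b : Fin 6 → ℤ) :
    ((Mb b).submatrix ![0, 1, 2] ![0, 1, 2]).det = forkDet (b 2) (b 0) (b 1) := by
  rw [Matrix.det_fin_three]
  simp [Mb, forkDet]

theorem Mb_eq_diagonal_add (b : Fin 6 → ℤ) : Mb b = Matrix.diagonal b + Mb 0 := by
  ext i j
  fin_cases i <;> fin_cases j <;> simp [Mb]

theorem isHermitian_map_Mb (b : Fin 6 → ℤ) : ((Mb b).map ((↑·) : ℤ → ℝ)).IsHermitian := by
  ext i j
  fin_cases i <;> fin_cases j <;> simp [Mb]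

theorem dotProduct_Mb_mulVec (b : Fin 6 → ℤ) (v : Fin 6 → ℝ) :
    v ⬝ᵥ ((Mb b).map ((↑·) : ℤ → ℝ)).mulVec v =
      b 0 * v 0 ^ 2 + b 1 * v 1 ^ 2 + b 2 * v 2 ^ 2 + b 3 * v 3 ^ 2 + b 4 * v 4 ^ 2 + b 5 * v 5 ^ 2
        - 2 * (v 0 * v 2 + v 1 * v 2 + v 2 * v 3 + v 3 * v 4 + v 3 * v 5) := by
  simp [Mb, Matrix.mulVec, dotProduct, Fin.sum_univ_succ]
  ring

theorem hGraphForm_eq_sum_sq {F : Type*} [Field F] {a b c d e f : F} (ha : a ≠ 0) (hb : b ≠ 0)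
    (he : e ≠ 0) (hf : f ≠ 0) {P Q : F} (hP : a * b * c - a - b = P) (hQ : e * f * d - e - f = Q)
    (hP0 : P ≠ 0) (p q r s t u : F) :
    a * p ^ 2 + b * q ^ 2 + c * r ^ 2 + d * s ^ 2 + e * t ^ 2 + f * u ^ 2
        - 2 * (p * r + q * r + r * s + s * t + s * u) =
      a * (p - r / a) ^ 2 + b * (q - r / b) ^ 2 + e * (t - s / e) ^ 2 + f * (u - s / f) ^ 2
        + P / (a * b) * (r - a * b / P * s) ^ 2
        + (P * Q - a * b * e * f) / (P * e * f) * s ^ 2 := by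
  have hc : c = (P + a + b) / (a * b) := by
    rw [eq_div_iff (mul_ne_zero ha hb)]; linear_combination hP
  have hd : d = (Q + e + f) / (e * f) := by
    rw [eq_div_iff (mul_ne_zero he hf)]; linear_combination hQ
  rw [hc, hd]
  field_simp
  ring

theorem hGraphForm_nonneg {F : Type*} [Field F] [LinearOrder F] [IsStrictOrderedRing F]
    {a b c d e f : F} (ha : 0 < a) (hb : 0 < b) (he : 0 < e) (hf : 0 < f)
    (hP : 0 < a * b * c - a - b)
    (hdet : a * b * e * f ≤ (a * b * c - a - b) * (e * f * d - e - f)) (p q r s t u : F) :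
    0 ≤ a * p ^ 2 + b * q ^ 2 + c * r ^ 2 + d * s ^ 2 + e * t ^ 2 + f * u ^ 2
        - 2 * (p * r + q * r + r * s + s * t + s * u) := by
  rw [hGraphForm_eq_sum_sq ha.ne' hb.ne' he.ne' hf.ne' rfl rfl hP.ne']
  have := sub_nonneg.mpr hdet
  positivity

theorem det_pos_of_posDef_map_intCast {n : Type*} [Fintype n] [DecidableEq n] {A : Matrix n n ℤ}
    (hA : (A.map ((↑·) : ℤ → ℝ)).PosDef) : 0 < A.det := by
  have hdet := hA.det_pos
  rwa [← Int.cast_det, Int.cast_pos] at hdet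

theorem posSemidef_map_Mb {b : Fin 6 → ℤ} (h0 : 0 < b 0) (h1 : 0 < b 1) (h4 : 0 < b 4)
    (h5 : 0 < b 5) (hP : 0 < forkDet (b 2) (b 0) (b 1)) (hdet : 0 ≤ (Mb b).det) :
    ((Mb b).map ((↑·) : ℤ → ℝ)).PosSemidef := by
  refine .of_dotProduct_mulVec_nonneg (isHermitian_map_Mb b) fun v => ?_
  rw [star_trivial, dotProduct_Mb_mulVec]
  rw [det_Mb, sub_nonneg] at hdet
  unfold forkDet at hP hdet
  exact hGraphForm_nonneg (by exact_mod_cast h0) (by exact_mod_cast h1) (by exact_mod_cast h4)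
    (by exact_mod_cast h5) (by exact_mod_cast hP) (by exact_mod_cast hdet) _ _ _ _ _ _

theorem posDef_map_Mb_iff {b : Fin 6 → ℤ} (h0 : 0 < b 0) (h1 : 0 < b 1) (h4 : 0 < b 4)
    (h5 : 0 < b 5) :
    ((Mb b).map ((↑·) : ℤ → ℝ)).PosDef ↔ 0 < forkDet (b 2) (b 0) (b 1) ∧ 0 < (Mb b).det := by
  constructor
  · intro h
    refine ⟨?_, det_pos_of_posDef_map_intCast h⟩
    rw [← det_submatrix_Mb]
    exact det_pos_of_posDef_map_intCast (h.submatrix (e := ![0, 1, 2]) (by decide))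
  · rintro ⟨hP, hdet⟩
    rw [(posSemidef_map_Mb h0 h1 h4 h5 hP hdet.le).posDef_iff_det_ne_zero, ← Int.cast_det]
    exact_mod_cast hdet.ne'

theorem mem_Tset_iff {b : Fin 6 → ℤ} :
    b ∈ Tset ↔ 2 ≤ b 0 ∧ 2 ≤ b 1 ∧ 2 ≤ b 4 ∧ 2 ≤ b 5 ∧ 0 < forkDet (b 2) (b 0) (b 1) ∧
      forkDet (b 2) (b 0) (b 1) * forkDet (b 3) (b 4) (b 5) = b 0 * b 1 * b 4 * b 5 + 1 := by
  refine and_congr_right fun h0 => and_congr_right fun h1 => and_congr_right fun h4 =>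
    and_congr_right fun h5 => ?_
  rw [posDef_map_Mb_iff (by omega) (by omega) (by omega) (by omega), det_Mb, sub_eq_iff_eq_add',
    and_assoc, and_congr_right_iff]
  exact fun _ => and_iff_right_of_imp fun hdet => by linarith

/-- The automorphism group of the `H`-graph. Since `Mb 0` is minus the adjacency matrix, these are
the permutations of the vertices that preserve `Mb 0`. -/
def hGraphAut : Subgroup (Equiv.Perm (Fin 6)) where
  carrier := {π | (Mb 0).submatrix π π = Mb 0}
  one_mem' := rfl
  mul_mem' {π σ} hπ hσ := by
    rw [Set.mem_ofPred_eq, Equiv.Perm.coe_mul, ← Matrix.submatrix_submatrix, hπ, hσ]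
  inv_mem' {π} hπ := by
    nth_rw 1 [Set.mem_ofPred_eq, ← hπ]
    rw [Matrix.submatrix_submatrix, ← Equiv.Perm.coe_mul, mul_inv_cancel, Equiv.Perm.coe_one,
      Matrix.submatrix_id_id]

theorem mem_hGraphAut_iff {π : Equiv.Perm (Fin 6)} :
    π ∈ hGraphAut ↔ (Mb 0).submatrix π π = Mb 0 :=
  Iff.rfl

instance : DecidablePred (· ∈ hGraphAut) := fun _ => decidable_of_iff' _ mem_hGraphAut_iff

/-- The automorphism of the `H`-graph that exchanges the leaves `b₁` and `b₂`. -/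
def leftSwap : Equiv.Perm (Fin 6) := Equiv.swap 0 1

/-- The automorphism of the `H`-graph that exchanges the leaves `b₅` and `b₆`. -/
def rightSwap : Equiv.Perm (Fin 6) := Equiv.swap 4 5

/-- The automorphism of the `H`-graph that exchanges its two forks. -/
def forkSwap : Equiv.Perm (Fin 6) := Equiv.swap 0 4 * Equiv.swap 1 5 * Equiv.swap 2 3

theorem mem_hGraphAut_iff_mem_finset : ∀ π, π ∈ hGraphAut ↔
    π ∈ ({1, leftSwap, rightSwap, leftSwap * rightSwap, forkSwap, leftSwap * forkSwap,
      rightSwap * forkSwap, leftSwap * rightSwap * forkSwap} : Finset (Equiv.Perm (Fin 6))) := by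
  decide +kernel

theorem card_hGraphAut : Nat.card hGraphAut = 8 := by
  rw [Nat.subtype_card _ fun π => (mem_hGraphAut_iff_mem_finset π).symm]
  decide +kernel

theorem closure_eq_hGraphAut :
    Subgroup.closure {leftSwap, rightSwap, forkSwap} = hGraphAut := by
  apply le_antisymm
  · rw [Subgroup.closure_le]
    rintro _ (rfl | rfl | rfl) <;> simp [mem_hGraphAut_iff_mem_finset]
  · have hl : leftSwap ∈ Subgroup.closure {leftSwap, rightSwap, forkSwap} :=
      Subgroup.subset_closure (by simp)
    have hr : rightSwap ∈ Subgroup.closure {leftSwap, rightSwap, forkSwap} :=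
      Subgroup.subset_closure (by simp)
    have hf : forkSwap ∈ Subgroup.closure {leftSwap, rightSwap, forkSwap} :=
      Subgroup.subset_closure (by simp)
    intro π hπ
    simp only [mem_hGraphAut_iff_mem_finset, Finset.mem_insert, Finset.mem_singleton] at hπ
    rcases hπ with rfl | rfl | rfl | rfl | rfl | rfl | rfl | rfl
    exacts [one_mem _, hl, hr, mul_mem hl hr, hf, mul_mem hl hf, mul_mem hr hf,
      mul_mem (mul_mem hl hr) hf]

theorem apply_mem_leaves {π : Equiv.Perm (Fin 6)} (hπ : π ∈ hGraphAut) :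
    ∀ i ∈ ({0, 1, 4, 5} : Finset (Fin 6)), π i ∈ ({0, 1, 4, 5} : Finset (Fin 6)) := by
  simp only [mem_hGraphAut_iff_mem_finset, Finset.mem_insert (α := Equiv.Perm (Fin 6)),
    Finset.mem_singleton (α := Equiv.Perm (Fin 6))] at hπ
  rcases hπ with rfl | rfl | rfl | rfl | rfl | rfl | rfl | rfl <;> decide

theorem Mb_comp {π : Equiv.Perm (Fin 6)} (hπ : π ∈ hGraphAut) (b : Fin 6 → ℤ) :
    Mb (b ∘ π) = (Mb b).submatrix π π := by
  rw [Mb_eq_diagonal_add (b ∘ π), Mb_eq_diagonal_add b, Matrix.submatrix_add, Pi.add_apply,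
    Pi.add_apply, Matrix.submatrix_diagonal_equiv, mem_hGraphAut_iff.mp hπ]

theorem comp_mem_Tset {π : Equiv.Perm (Fin 6)} (hπ : π ∈ hGraphAut) {b : Fin 6 → ℤ}
    (hb : b ∈ Tset) : b ∘ π ∈ Tset := by
  obtain ⟨h0, h1, h4, h5, hpos, hdet⟩ := hb
  have hleaf : ∀ i ∈ ({0, 1, 4, 5} : Finset (Fin 6)), 2 ≤ b i := by simp [h0, h1, h4, h5]
  have hleaf' i hi : 2 ≤ b (π i) := hleaf _ (apply_mem_leaves hπ i hi)
  refine ⟨hleaf' 0 (by simp), hleaf' 1 (by simp), hleaf' 4 (by simp), hleaf' 5 (by simp), ?_, ?_⟩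
  · rw [Mb_comp hπ, ← Matrix.submatrix_map]
    exact hpos.submatrix π.injective
  · rw [Mb_comp hπ, Matrix.det_submatrix_equiv_self, hdet]

theorem left_leaves_ne_of_mem_Tset {b : Fin 6 → ℤ} (hb : b ∈ Tset) : b 0 ≠ b 1 := by
  intro heq
  obtain ⟨h0, -, -, -, -, hdet⟩ := mem_Tset_iff.mp hb
  have hdvd : b 0 ∣ 1 := by
    refine ⟨(b 0 * b 2 - 2) * forkDet (b 3) (b 4) (b 5) - b 0 * b 4 * b 5, ?_⟩
    rw [forkDet.eq_def (b 2), ← heq] at hdet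
    linear_combination -hdet
  have := Int.le_of_dvd one_pos hdvd
  omega

theorem right_leaves_ne_of_mem_Tset {b : Fin 6 → ℤ} (hb : b ∈ Tset) : b 4 ≠ b 5 :=
  left_leaves_ne_of_mem_Tset
    (comp_mem_Tset (π := forkSwap) (by simp [mem_hGraphAut_iff_mem_finset]) hb)

theorem exists_sorted_comp {α : Type*} [LinearOrder α] {b : Fin 6 → α} (h01 : b 0 ≠ b 1)
    (h45 : b 4 ≠ b 5) :
    ∃ π ∈ hGraphAut, b (π 0) < b (π 1) ∧ b (π 4) < b (π 5) ∧ b (π 2) ≤ b (π 3) := by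
  simp only [mem_hGraphAut_iff_mem_finset, leftSwap, rightSwap, forkSwap, Finset.mem_insert,
    Finset.mem_singleton, exists_eq_or_imp, ↓existsAndEq, Equiv.Perm.coe_one, id_eq,
    Equiv.Perm.coe_mul, Function.comp_apply, Equiv.swap_apply_def, Fin.reduceEq, ↓reduceIte,
    true_and]
  grind

theorem eq_one_of_sorted_comp {α : Type*} [LinearOrder α] {b : Fin 6 → α}
    (hb : b 0 < b 1 ∧ b 4 < b 5 ∧ b 2 < b 3) {π : Equiv.Perm (Fin 6)} (hπ : π ∈ hGraphAut)
    (hbπ : b (π 0) < b (π 1) ∧ b (π 4) < b (π 5) ∧ b (π 2) < b (π 3)) : π = 1 := by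
  revert π
  simp only [mem_hGraphAut_iff_mem_finset, leftSwap, rightSwap, forkSwap, Finset.mem_insert,
    Finset.mem_singleton, forall_eq_or_imp, forall_eq, Equiv.Perm.coe_one, id_eq,
    Equiv.Perm.coe_mul, Function.comp_apply, Equiv.swap_apply_def, Fin.reduceEq, ↓reduceIte,
    implies_true, true_and]
  grind

/-- The determinant of the path with consecutive weights `a`, `c`, `d`, `e`, the spine of the
`H`-graph through one leaf on either side. It is the coefficient of `b * f` when the determinant
equation is expanded in the two remaining leaves `b`, `f`. -/
def spineDet (a c d e : ℤ) : ℤ := (a * c - 1) * (d * e - 1) - a * e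

theorem spineDet_reverse (a c d e : ℤ) : spineDet e d c a = spineDet a c d e := by
  unfold spineDet; ring

/-- The equation `det M = 1` for `M(a, b, c, d, e, f)`, with the two leaves in each fork sorted. -/
structure IsSortedSolution (a b c d e f : ℤ) : Prop where
  two_le_left : 2 ≤ a
  left_lt : a < b
  two_le_right : 2 ≤ e
  right_lt : e < f
  forkDet_left_pos : 0 < forkDet c a b
  forkDet_mul_forkDet : forkDet c a b * forkDet d e f = a * b * e * f + 1

theorem six_mul_add_le {a b : ℤ} (ha : 2 ≤ a) (hab : a < b) : 6 * (a + b) ≤ 5 * (a * b) := by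
  nlinarith [mul_nonneg (sub_nonneg.2 ha) (show 0 ≤ b - 3 by omega)]

theorem six_le_mul {a b : ℤ} (ha : 2 ≤ a) (hab : a < b) : 6 ≤ a * b := by
  nlinarith

theorem mul_le_six_mul_forkDet {m c a b : ℤ} (ha : 2 ≤ a) (hab : a < b) (hc : m ≤ c) :
    (6 * m - 5) * (a * b) ≤ 6 * forkDet c a b := by
  have hmul : m * (a * b) ≤ c * (a * b) :=
    mul_le_mul_of_nonneg_right hc (by linarith [six_le_mul ha hab])
  unfold forkDet
  linarith [six_mul_add_le ha hab]

/- The constant `11` is attained at `d = 2`, `a = 3`, `b = 7`: the largest value of `1/a + 1/b`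
below `1/2` is `1/3 + 1/7`. -/
theorem forkDet_le_eleven_mul {a b d : ℤ} (hd : 2 ≤ d) (hd' : d ≤ 7) (ha : 2 ≤ a) (ha' : a ≤ 13)
    (hR : 0 < d * forkDet 1 a b - a * b) :
    forkDet 1 a b ≤ 11 * (d * forkDet 1 a b - a * b) := by
  unfold forkDet at *
  interval_cases d <;> interval_cases a <;> omega

namespace IsSortedSolution

variable {a b c d e f : ℤ}

theorem forkDet_right_pos (h : IsSortedSolution a b c d e f) : 0 < forkDet d e f := by
  have := six_le_mul h.two_le_left h.left_lt
  have := six_le_mul h.two_le_right h.right_lt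
  have hprod : 0 < forkDet c a b * forkDet d e f := by
    rw [h.forkDet_mul_forkDet, mul_assoc (a * b)]
    positivity
  exact pos_of_mul_pos_right hprod h.forkDet_left_pos.le

theorem swap (h : IsSortedSolution a b c d e f) : IsSortedSolution e f d c a b where
  two_le_left := h.two_le_right
  left_lt := h.right_lt
  two_le_right := h.two_le_left
  right_lt := h.left_lt
  forkDet_left_pos := h.forkDet_right_pos
  forkDet_mul_forkDet := by linear_combination h.forkDet_mul_forkDet

theorem one_le_left_center (h : IsSortedSolution a b c d e f) : 1 ≤ c := by
  have hab := six_le_mul h.two_le_left h.left_lt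
  have hP := h.forkDet_left_pos
  have ha := h.two_le_left
  have hb := h.left_lt
  unfold forkDet at hP
  exact pos_of_mul_pos_right (a := a * b) (by linarith) (by positivity)

theorem mul_le_of_le_forkDet {k l : ℤ} (h : IsSortedSolution a b c d e f)
    (hl : 0 ≤ l) (hP : k * (a * b) ≤ 6 * forkDet c a b)
    (hQ : l * (e * f) ≤ 6 * forkDet d e f) : k * l ≤ 37 := by
  have hab := six_le_mul h.two_le_left h.left_lt
  have hef := six_le_mul h.two_le_right h.right_lt
  have habef : 36 ≤ (a * b) * (e * f) := by nlinarith
  have hmul : k * (a * b) * (l * (e * f)) ≤ 6 * forkDet c a b * (6 * forkDet d e f) :=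
    mul_le_mul hP hQ (by positivity) (by linarith [h.forkDet_left_pos])
  have : (k * l - 36) * ((a * b) * (e * f)) ≤ 36 := by linarith [h.forkDet_mul_forkDet]
  nlinarith

theorem left_center_eq_one (h : IsSortedSolution a b c d e f) (hcd : c ≤ d) : c = 1 := by
  by_contra hne
  have hc : 2 ≤ c := by have := h.one_le_left_center; omega
  have hP := mul_le_six_mul_forkDet h.two_le_left h.left_lt hc
  have hQ := mul_le_six_mul_forkDet h.two_le_right h.right_lt (hc.trans hcd)
  have := h.mul_le_of_le_forkDet (by norm_num) hP hQ
  norm_num at this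

theorem two_le_right_center (h : IsSortedSolution a b 1 d e f) : 2 ≤ d := by
  by_contra! hd
  obtain rfl : d = 1 := by have := h.swap.one_le_left_center; omega
  have ha := h.two_le_left
  have hb := h.left_lt
  have he := h.two_le_right
  have hf := h.right_lt
  have hP : forkDet 1 a b ≤ a * b := by unfold forkDet; linarith
  have hQ : forkDet 1 e f ≤ e * f := by unfold forkDet; linarith
  have hPQ := mul_le_mul hP hQ h.forkDet_right_pos.le
    (by linarith [six_le_mul h.two_le_left h.left_lt])
  linarith [h.forkDet_mul_forkDet]

theorem right_center_le (h : IsSortedSolution a b 1 d e f) : d ≤ 7 := by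
  have hP := mul_le_six_mul_forkDet h.two_le_left h.left_lt (le_refl 1)
  have hQ := mul_le_six_mul_forkDet h.two_le_right h.right_lt (le_refl d)
  have := h.mul_le_of_le_forkDet (by linarith [h.two_le_right_center]) hP hQ
  linarith

theorem left_le (h : IsSortedSolution a b 1 d e f) : a ≤ 13 := by
  have hef := six_le_mul h.two_le_right h.right_lt
  have hQ := mul_le_six_mul_forkDet h.two_le_right h.right_lt h.two_le_right_center
  have hPQ := mul_le_mul_of_nonneg_left hQ h.forkDet_left_pos.le
  have hmul : (7 * forkDet 1 a b - 6 * (a * b)) * (e * f) ≤ 6 := by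
    linarith [h.forkDet_mul_forkDet]
  have hP : 7 * forkDet 1 a b - 6 * (a * b) ≤ 1 := by nlinarith
  unfold forkDet at hP
  by_contra! ha
  have hb := h.left_lt
  have : 7 * 8 ≤ (a - 7) * (b - 7) := mul_le_mul (by omega) (by omega) (by norm_num) (by omega)
  linarith

theorem right_le (h : IsSortedSolution a b 1 d e f) : e ≤ 22 := by
  have hef := six_le_mul h.two_le_right h.right_lt
  have he := h.two_le_right
  have hf := h.right_lt
  have hP := h.forkDet_left_pos
  have hsum : 0 < e + f := by linarith
  have heq : (d * forkDet 1 a b - a * b) * (e * f) = forkDet 1 a b * (e + f) + 1 := by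
    have := h.forkDet_mul_forkDet
    rw [forkDet.eq_def d] at this
    linear_combination this
  have hR : 0 < d * forkDet 1 a b - a * b := by
    refine pos_of_mul_pos_left (b := e * f) ?_ (by positivity)
    rw [heq]
    positivity
  have hPR := forkDet_le_eleven_mul h.two_le_right_center h.right_center_le h.two_le_left
    h.left_le hR
  have hmul : forkDet 1 a b * (e * f) ≤ forkDet 1 a b * (11 * (e + f) + 11) := by
    linarith [mul_le_mul_of_nonneg_right hPR (by positivity : 0 ≤ e * f)]
  have hle : e * f ≤ 11 * (e + f) + 11 := le_of_mul_le_mul_left hmul hP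
  by_contra! he'
  have : 12 * 13 ≤ (e - 11) * (f - 11) := mul_le_mul (by omega) (by omega) (by norm_num) (by omega)
  linarith

theorem spineDet_pos (h : IsSortedSolution a b c d e f) : 0 < spineDet a c d e := by
  have ha : 0 < a := by linarith [h.two_le_left]
  have hb : 0 < b := ha.trans h.left_lt
  have he : 0 < e := by linarith [h.two_le_right]
  have hf : 0 < f := he.trans h.right_lt
  have hac : 1 ≤ a * c - 1 := by nlinarith [h.two_le_left, h.one_le_left_center]
  have hde : 1 ≤ d * e - 1 := by nlinarith [h.two_le_right, h.swap.one_le_left_center]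
  have hbe : a * e < (a * c - 1) * (b * e) :=
    calc a * e < b * e := mul_lt_mul_of_pos_right h.left_lt he
      _ ≤ (a * c - 1) * (b * e) := le_mul_of_one_le_left (by positivity) hac
  have haf : 0 < a * (d * e - 1) * f := by positivity
  have hmul : spineDet a c d e * (b * f) =
      ((a * c - 1) * (b * e) - a * e) + a * (d * e - 1) * f + 1 := by
    have := h.forkDet_mul_forkDet
    unfold forkDet at this
    unfold spineDet
    linear_combination this
  exact pos_of_mul_pos_left (b := b * f) (by linarith) (by positivity)

theorem sub_mul_sub_eq (h : IsSortedSolution a b c d e f) :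
    (spineDet a c d e * b - a * (d * e - 1)) * (spineDet a c d e * f - e * (a * c - 1)) =
      spineDet a c d e + (a * e) ^ 2 := by
  have := h.forkDet_mul_forkDet
  unfold forkDet at this
  unfold spineDet
  linear_combination ((a * c - 1) * (d * e - 1) - a * e) * this

theorem spineDet_mul_le_or (h : IsSortedSolution a b c d e f) :
    spineDet a c d e * b ≤ a * (d * e - 1) + a * e + spineDet a c d e ∨
      spineDet a c d e * f ≤ e * (a * c - 1) + a * e + spineDet a c d e := by
  by_contra! hlt
  have hK := h.spineDet_pos
  have hyp := h.sub_mul_sub_eq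
  set K := spineDet a c d e
  have ha := h.two_le_left
  have he := h.two_le_right
  have hmul : (a * e + K) * (a * e + K) <
      (K * b - a * (d * e - 1)) * (K * f - e * (a * c - 1)) :=
    mul_lt_mul'' (by linarith) (by linarith) (by positivity) (by positivity)
  have hKK : K ≤ K * K := le_mul_of_one_le_left hK.le hK
  have hKae : 0 < a * e * K := by positivity
  linarith [hyp, hmul]

end IsSortedSolution

/-- An upper bound for the leaf next to `a` on the half of the hyperbola where that leaf is small,
see `IsSortedSolution.le_leafBound_or`. -/
def leafBound (a c d e : ℤ) : ℤ :=
  (a * (d * e - 1) + a * e) / spineDet a c d e + 1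

/-- The value of `f` obtained by solving `forkDet c a b * forkDet d e f = a * b * e * f + 1`, which
is linear in `f`. -/
def lastLeaf (a b c d e : ℤ) : ℤ :=
  (forkDet c a b * e + 1) / (forkDet c a b * (d * e - 1) - a * b * e)

namespace IsSortedSolution

variable {a b c d e f : ℤ}

theorem eq_lastLeaf (h : IsSortedSolution a b c d e f) : f = lastLeaf a b c d e := by
  have hlin : f * (forkDet c a b * (d * e - 1) - a * b * e) = forkDet c a b * e + 1 := by
    have := h.forkDet_mul_forkDet
    rw [forkDet.eq_def d] at this
    linear_combination this
  have he := h.two_le_right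
  have hP := h.forkDet_left_pos
  refine Int.eq_ediv_of_mul_eq_left ?_ hlin
  intro h0
  rw [h0, mul_zero] at hlin
  have : 0 < forkDet c a b * e := by positivity
  linarith

theorem le_leafBound_or (h : IsSortedSolution a b c d e f) :
    b ≤ leafBound a c d e ∨ f ≤ leafBound e d c a := by
  have hK := h.spineDet_pos
  unfold leafBound
  rw [spineDet_reverse a c d e, ← sub_le_iff_le_add, ← sub_le_iff_le_add, Int.le_ediv_iff_mul_le hK,
    Int.le_ediv_iff_mul_le hK]
  exact h.spineDet_mul_le_or.imp (fun hb => by linarith) fun hf => by linarith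

end IsSortedSolution

theorem isSortedSolution_iff {a b c d e f : ℤ} : IsSortedSolution a b c d e f ↔
    2 ≤ a ∧ a < b ∧ 2 ≤ e ∧ e < f ∧ 0 < forkDet c a b ∧
      forkDet c a b * forkDet d e f = a * b * e * f + 1 :=
  ⟨fun ⟨h1, h2, h3, h4, h5, h6⟩ => ⟨h1, h2, h3, h4, h5, h6⟩,
    fun ⟨h1, h2, h3, h4, h5, h6⟩ => ⟨h1, h2, h3, h4, h5, h6⟩⟩

instance (a b c d e f : ℤ) : Decidable (IsSortedSolution a b c d e f) :=
  decidable_of_iff' _ isSortedSolution_iff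

/-- The 39 elements of `Tset` with `b₁ < b₂`, `b₅ < b₆` and `b₃ < b₄`, one for each orbit. -/
def sortedReps : Finset (Fin 6 → ℤ) := {
  ![2, 3, 1, 7, 2, 3],
  ![2, 5, 1, 4, 2, 7],
  ![2, 7, 1, 3, 6, 31],
  ![2, 7, 1, 3, 7, 18],
  ![2, 9, 1, 3, 3, 11],
  ![2, 11, 1, 3, 2, 19],
  ![2, 27, 1, 3, 2, 3],
  ![3, 4, 1, 3, 2, 11],
  ![3, 4, 1, 3, 3, 4],
  ![3, 5, 1, 3, 2, 3],
  ![3, 7, 1, 2, 12, 133],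
  ![3, 7, 1, 2, 13, 72],
  ![3, 8, 1, 2, 7, 92],
  ![3, 8, 1, 2, 8, 35],
  ![3, 8, 1, 2, 11, 16],
  ![3, 11, 1, 2, 4, 77],
  ![3, 11, 1, 2, 5, 16],
  ![3, 16, 1, 2, 3, 88],
  ![3, 17, 1, 2, 3, 47],
  ![3, 47, 1, 2, 4, 5],
  ![3, 56, 1, 2, 3, 8],
  ![3, 97, 1, 2, 3, 7],
  ![4, 5, 1, 2, 6, 67],
  ![4, 5, 1, 2, 7, 26],
  ![4, 7, 1, 2, 3, 52],
  ![4, 9, 1, 2, 3, 10],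
  ![4, 13, 1, 2, 2, 71],
  ![4, 17, 1, 2, 2, 19],
  ![4, 23, 1, 2, 3, 4],
  ![4, 25, 1, 2, 2, 11],
  ![4, 77, 1, 2, 2, 7],
  ![5, 7, 1, 2, 3, 7],
  ![5, 8, 1, 2, 2, 55],
  ![5, 9, 1, 2, 2, 21],
  ![5, 16, 1, 2, 2, 7],
  ![5, 33, 1, 2, 2, 5],
  ![8, 57, 1, 2, 2, 3],
  ![9, 32, 1, 2, 2, 3],
  ![12, 17, 1, 2, 2, 3]}

theorem mem_sortedReps_of_le_leafBound_left :
    ∀ d ∈ Finset.Icc 2 7, ∀ a ∈ Finset.Icc 2 13, ∀ e ∈ Finset.Icc 2 22,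
    ∀ b ∈ Finset.Icc (a + 1) (leafBound a 1 d e),
      IsSortedSolution a b 1 d e (lastLeaf a b 1 d e) →
        ![a, b, 1, d, e, lastLeaf a b 1 d e] ∈ sortedReps := by
  decide +kernel

theorem mem_sortedReps_of_le_leafBound_right :
    ∀ d ∈ Finset.Icc 2 7, ∀ a ∈ Finset.Icc 2 13, ∀ e ∈ Finset.Icc 2 22,
    ∀ f ∈ Finset.Icc (e + 1) (leafBound e d 1 a),
      IsSortedSolution e f d 1 a (lastLeaf e f d 1 a) →
        ![a, lastLeaf e f d 1 a, 1, d, e, f] ∈ sortedReps := by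
  decide +kernel

theorem IsSortedSolution.mem_sortedReps {a b c d e f : ℤ} (h : IsSortedSolution a b c d e f)
    (hcd : c ≤ d) : ![a, b, c, d, e, f] ∈ sortedReps := by
  obtain rfl := h.left_center_eq_one hcd
  have hd := Finset.mem_Icc.mpr ⟨h.two_le_right_center, h.right_center_le⟩
  have ha := Finset.mem_Icc.mpr ⟨h.two_le_left, h.left_le⟩
  have he := Finset.mem_Icc.mpr ⟨h.two_le_right, h.right_le⟩
  rcases h.le_leafBound_or with hb | hf
  · have hsearch := mem_sortedReps_of_le_leafBound_left d hd a ha e he b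
      (Finset.mem_Icc.mpr ⟨h.left_lt, hb⟩)
    rw [← h.eq_lastLeaf] at hsearch
    exact hsearch h
  · have hsearch := mem_sortedReps_of_le_leafBound_right d hd a ha e he f
      (Finset.mem_Icc.mpr ⟨h.right_lt, hf⟩)
    rw [← h.swap.eq_lastLeaf] at hsearch
    exact hsearch h.swap

theorem card_sortedReps : sortedReps.card = 39 := by
  decide +kernel

theorem isSortedSolution_iff_mem_Tset {b : Fin 6 → ℤ} (h01 : b 0 < b 1) (h45 : b 4 < b 5) :
    IsSortedSolution (b 0) (b 1) (b 2) (b 3) (b 4) (b 5) ↔ b ∈ Tset := by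
  rw [isSortedSolution_iff, mem_Tset_iff]
  constructor
  · rintro ⟨h0, -, h4, -, h⟩
    exact ⟨h0, by omega, h4, by omega, h⟩
  · rintro ⟨h0, -, h4, -, h⟩
    exact ⟨h0, h01, h4, h45, h⟩

theorem mem_sortedReps_of_mem_Tset {b : Fin 6 → ℤ} (hb : b ∈ Tset) (h01 : b 0 < b 1)
    (h45 : b 4 < b 5) (h23 : b 2 ≤ b 3) : b ∈ sortedReps := by
  have hmem := ((isSortedSolution_iff_mem_Tset h01 h45).mpr hb).mem_sortedReps h23
  rwa [show ![b 0, b 1, b 2, b 3, b 4, b 5] = b from List.ofFn_injective rfl] at hmem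

theorem isSortedSolution_of_mem_sortedReps :
    ∀ b ∈ sortedReps, IsSortedSolution (b 0) (b 1) (b 2) (b 3) (b 4) (b 5) ∧ b 2 < b 3 := by
  decide +kernel

theorem isFreeTransversal_sortedReps : IsFreeTransversal hGraphAutᵈᵐᵃ Tset sortedReps where
  subset b hb := by
    have h := (isSortedSolution_of_mem_sortedReps b hb).1
    exact (isSortedSolution_iff_mem_Tset h.left_lt h.right_lt).mp h
  smul_mem g _ hb := comp_mem_Tset (DomMulAct.mk.symm g).2 hb
  exists_smul_mem b hb := by
    obtain ⟨π, hπ, h01, h45, h23⟩ :=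
      exists_sorted_comp (left_leaves_ne_of_mem_Tset hb) (right_leaves_ne_of_mem_Tset hb)
    exact ⟨DomMulAct.mk ⟨π, hπ⟩,
      mem_sortedReps_of_mem_Tset (comp_mem_Tset hπ hb) h01 h45 h23⟩
  eq_one_of_smul_mem b hb g hgb := by
    obtain ⟨h, h23⟩ := isSortedSolution_of_mem_sortedReps b hb
    obtain ⟨h', h23'⟩ := isSortedSolution_of_mem_sortedReps _ hgb
    let π : hGraphAut := DomMulAct.mk.symm g
    have hone : (π : Equiv.Perm (Fin 6)) = 1 :=
      eq_one_of_sorted_comp ⟨h.left_lt, h.right_lt, h23⟩ π.2 ⟨h'.left_lt, h'.right_lt, h23'⟩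
    exact DomMulAct.mk.symm.injective (Subtype.ext hone)

theorem orbit_domMulAct_eq (b : Fin 6 → ℤ) :
    MulAction.orbit hGraphAutᵈᵐᵃ b = {b' | ∃ π ∈ hGraphAut, b' = b ∘ π} := by
  ext b'
  constructor
  · rintro ⟨g, rfl⟩
    obtain ⟨π, rfl⟩ := DomMulAct.mk.surjective g
    exact ⟨π, π.2, rfl⟩
  · rintro ⟨π, hπ, rfl⟩
    exact ⟨DomMulAct.mk ⟨π, hπ⟩, rfl⟩

theorem hgraph_classification :
    Set.ncard Tset = 312 ∧
    (∀ G : Subgroup (Equiv.Perm (Fin 6)),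
      G = Subgroup.closure
        {Equiv.swap (0 : Fin 6) 1, Equiv.swap (4 : Fin 6) 5,
          Equiv.swap (0 : Fin 6) 4 * Equiv.swap (1 : Fin 6) 5 * Equiv.swap (2 : Fin 6) 3} →
      Nat.card G = 8 ∧
      (∀ b ∈ Tset, ∀ π ∈ G, (b ∘ π) ∈ Tset) ∧
      Set.ncard {s : Set (Fin 6 → ℤ) |
        ∃ b ∈ Tset, s = {b' | ∃ π ∈ G, b' = b ∘ π}} = 39) := by
  refine ⟨?_, fun G hG => ?_⟩
  · rw [isFreeTransversal_sortedReps.ncard_eq, ← Nat.card_congr DomMulAct.mk, card_hGraphAut,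
      Set.ncard_coe_finset, card_sortedReps]
  · obtain rfl : G = hGraphAut := hG.trans closure_eq_hGraphAut
    refine ⟨card_hGraphAut, fun b hb π hπ => comp_mem_Tset hπ hb, ?_⟩
    have horbits : {s | ∃ b ∈ Tset, s = {b' | ∃ π ∈ hGraphAut, b' = b ∘ π}} =
        MulAction.orbit hGraphAutᵈᵐᵃ '' Tset := by
      simp only [Set.image, orbit_domMulAct_eq, eq_comm]
    rw [horbits, isFreeTransversal_sortedReps.ncard_image_orbit, Set.ncard_coe_finset,
      card_sortedReps]
end

section
/- Let h, k ∈ ℤ with k ≥ 1 and gcd(h,k) = 1, let L, R₁, R₂, μ₁, a₁, a₂, ℓ₂ ∈ ℤ, and let p be an odd prime with p | k, p | R₁, p ∤ μ₁ and p ∤ a₁. Then Σ_{ℓ₁=0}^{k−1} e^{(2πi h/k)(L R₁ μ₁ ℓ₁² + (2μ₁a₁ + L²R₁R₂ℓ₂ + LR₁a₂)ℓ₁)} = 0. -/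
/-!
If `a * t = 0` in a finite commutative ring, then `a * x ^ 2 + b * x` grows by the constant `b * t`
under `x ↦ x + t`. Translating the summation variable by `t` therefore multiplies the sum of
`ψ (a * x ^ 2 + b * x)` by `ψ (b * t)`, so the sum vanishes when `ψ (b * t) ≠ 1`. In `ZMod k`, a
divisor `d` of `k` and of `a` that does not divide `b` gives such a translation, `t = k / d`.
-/

open Complex

theorem sum_addChar_quadratic_eq_zero {R R' : Type*} [CommRing R] [Fintype R] [Semiring R']
    [IsDomain R'] (ψ : AddChar R R') {a b t : R} (hat : a * t = 0) (hbt : ψ (b * t) ≠ 1) :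
    ∑ x, ψ (a * x ^ 2 + b * x) = 0 := by
  refine eq_zero_of_mul_eq_self_left hbt ?_
  calc ψ (b * t) * ∑ x, ψ (a * x ^ 2 + b * x)
      = ∑ x, ψ (a * (x + t) ^ 2 + b * (x + t)) := by
        rw [Finset.mul_sum]
        refine Finset.sum_congr rfl fun x _ ↦ ?_
        rw [← AddChar.map_add_eq_mul]
        congr 1
        linear_combination -(2 * x + t) * hat
    _ = ∑ x, ψ (a * x ^ 2 + b * x) :=
        Equiv.sum_comp (Equiv.addRight t) fun x ↦ ψ (a * x ^ 2 + b * x)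

theorem sum_range_natCast_zmod {M : Type*} [AddCommMonoid M] (k : ℕ) [NeZero k] (f : ZMod k → M) :
    ∑ n ∈ Finset.range k, f n = ∑ x, f x := by
  refine Finset.sum_nbij' (fun n ↦ (n : ZMod k)) ZMod.val (by simp) (by simp [ZMod.val_lt]) ?_
    (by simp) (by simp)
  exact fun n hn ↦ ZMod.val_cast_of_lt (Finset.mem_range.mp hn)

theorem exp_two_pi_mul_I_mul_div_mul_intCast (h x : ℤ) (k : ℕ) [NeZero k] :
    exp (2 * Real.pi * I * h / k * x) = ZMod.stdAddChar ((h * x : ℤ) : ZMod k) := by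
  rw [ZMod.stdAddChar_coe]
  push_cast
  ring_nf

theorem stdAddChar_intCast_eq_one_iff {k : ℕ} [NeZero k] {x : ℤ} :
    ZMod.stdAddChar (x : ZMod k) = 1 ↔ (k : ℤ) ∣ x := by
  rw [← AddChar.map_zero_eq_one (ZMod.stdAddChar (N := k)), ZMod.injective_stdAddChar.eq_iff,
    ZMod.intCast_zmod_eq_zero_iff_dvd]

theorem gauss_sum_vanishes_general (h k : ℤ) (hk : 1 ≤ k) {a b d : ℤ} (hdk : d ∣ k)
    (hda : d ∣ h * a) (hdb : ¬ d ∣ h * b) :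
    ∑ n ∈ Finset.range k.toNat,
      exp (2 * Real.pi * I * (h : ℂ) / (k : ℂ) * ((a * n ^ 2 + b * n : ℤ) : ℂ)) = 0 := by
  lift k to ℕ using by lia
  have : NeZero k := ⟨by lia⟩
  obtain ⟨t, ht⟩ := hdk
  have ht0 : t ≠ 0 := by rintro rfl; lia
  have hat : ((h * a : ℤ) : ZMod k) * (t : ZMod k) = 0 := by
    rw [← Int.cast_mul, ZMod.intCast_zmod_eq_zero_iff_dvd, ht]
    exact mul_dvd_mul_right hda t
  have hbt : ZMod.stdAddChar (((h * b : ℤ) : ZMod k) * (t : ZMod k)) ≠ 1 := by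
    rw [← Int.cast_mul, Ne, stdAddChar_intCast_eq_one_iff, ht, mul_dvd_mul_iff_right ht0]
    exact hdb
  rw [← sum_addChar_quadratic_eq_zero _ hat hbt, ← sum_range_natCast_zmod, Int.toNat_natCast]
  refine Finset.sum_congr rfl fun n _ ↦ ?_
  rw [Int.cast_natCast, exp_two_pi_mul_I_mul_div_mul_intCast]
  congr 1
  push_cast
  ring

theorem not_dvd_two_mul_mul {p : ℕ} (hp : p.Prime) (hodd : Odd p) {x y : ℤ}
    (hx : ¬ (p : ℤ) ∣ x) (hy : ¬ (p : ℤ) ∣ y) : ¬ (p : ℤ) ∣ 2 * x * y := by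
  have hp' : Prime (p : ℤ) := Nat.prime_iff_prime_int.mp hp
  have h2 : ¬ (p : ℤ) ∣ 2 := mod_cast hp.coprime_iff_not_dvd.mp (Nat.coprime_two_right.mpr hodd)
  exact hp'.not_dvd_mul (hp'.not_dvd_mul h2 hx) hy

theorem gauss_sum_vanishes (h k : ℤ) (hk : 1 ≤ k) (hhk : IsCoprime h k)
    (L R₁ R₂ μ₁ a₁ a₂ ℓ₂ : ℤ) (p : ℕ) (hp : p.Prime) (hodd : Odd p)
    (hpk : (p : ℤ) ∣ k) (hpR : (p : ℤ) ∣ R₁) (hpμ : ¬ (p : ℤ) ∣ μ₁)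
    (hpa : ¬ (p : ℤ) ∣ a₁) :
    ∑ ℓ₁ ∈ Finset.range k.toNat,
      Complex.exp (2 * Real.pi * Complex.I * (h : ℂ) / (k : ℂ) *
        ((L * R₁ * μ₁ * ℓ₁ ^ 2 +
          (2 * μ₁ * a₁ + L ^ 2 * R₁ * R₂ * ℓ₂ + L * R₁ * a₂) * ℓ₁ : ℤ) : ℂ)) = 0 := by
  have hph : IsCoprime (p : ℤ) h := hhk.symm.of_isCoprime_of_dvd_left hpk
  have hlinear : ¬ (p : ℤ) ∣ 2 * μ₁ * a₁ + L ^ 2 * R₁ * R₂ * ℓ₂ + L * R₁ * a₂ := by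
    rw [dvd_add_left ((hpR.mul_left L).mul_right a₂),
      dvd_add_left (((hpR.mul_left (L ^ 2)).mul_right R₂).mul_right ℓ₂)]
    exact not_dvd_two_mul_mul hp hodd hpμ hpa
  exact gauss_sum_vanishes_general h k hk hpk (((hpR.mul_left L).mul_right μ₁).mul_left h)
    fun hdvd ↦ hlinear (hph.dvd_of_dvd_mul_left hdvd)
end

section
/- Under these assumptions, for every h ∈ ℤ and every positive integer k with gcd(h,k) = 1, Σ_{j∈{1,2}} (−1)^{j+1} Σ_{α∈𝒮_j} Σ_{ℓ∈{0,…,k−1}²} e^{2πi(h/k)·L·Q(ℓ+α)} = 0, where the inner sum over α runs over the eight members of the family 𝒮_j counted with multiplicity. -/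
open Complex

/-- `e(x) = e^{2πix}` for rational `x`. -/
noncomputable def eQ (x : ℚ) : ℂ := Complex.exp (2 * Real.pi * Complex.I * (x : ℂ))

/-- The two points `x/N` and `1 - x/N = (N-x)/N`. -/
noncomputable def pt (x N : ℕ) : Fin 2 → ℚ := ![(x : ℚ) / N, 1 - (x : ℚ) / N]

/-! Clearing denominators, the inner sum at `(a/N₁, b/N₂)` becomes the sum `G(a, b)` of
`e((h/k)(μ₁x²/N₁ + xy + μ₃y²/N₂))` over `x ≡ a (mod N₁)`, `y ≡ b (mod N₂)`, with `x` and `y` taken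
modulo `kN₁` and `kN₂`. The substitution `(x, y) ↦ (ux, wy)` shows `G(ua, wb) = G(a, b)` whenever
`u² ≡ 1 (mod kN₁)`, `w² ≡ 1 (mod kN₂)` and `uw ≡ 1 (mod k)`. From `r² ≡ s² (mod 2N₁)` we get
`s ≡ ±r` modulo each prime power dividing `N₁`, with a sign depending on the prime. Unless some odd
prime divides all of `N₁`, `N₂` and `k`, these signs glue by the Chinese remainder theorem to such
`u` and `w` with `ur ≡ ±s (mod N₁)` for one global sign (the local sign at `2`) and
`w ≡ 1 (mod N₂)`. Hence `G(r, b) + G(-r, b)` does not change when `r` is replaced by `s`. If an odd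
prime `p` does divide `N₁`, `N₂` and `k`, it fails to divide `μ₁` or `μ₃`, and shifting `ℓ₁` or `ℓ₂`
by `k/p` shows that every `G` in question vanishes. In both cases replacing `r₁` by `s₁` leaves the
four-point sum over `(±r₁, ±x)` unchanged, so the two families cancel in pairs, `x = r₂` and
`x = s₂`. -/

theorem eQ_add (x y : ℚ) : eQ (x + y) = eQ x * eQ y := by
  simp only [eQ, Rat.cast_add, mul_add, Complex.exp_add]

theorem eQ_eq_one_iff (x : ℚ) : eQ x = 1 ↔ ∃ n : ℤ, x = n := by
  rw [eQ, Complex.exp_eq_one_iff]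
  refine exists_congr fun n => ?_
  rw [mul_comm, mul_left_inj' Complex.two_pi_I_ne_zero]
  norm_cast

theorem eQ_add_intCast (x : ℚ) (n : ℤ) : eQ (x + n) = eQ x := by
  rw [eQ_add, (eQ_eq_one_iff n).2 ⟨n, rfl⟩, mul_one]

section PeriodicSum

theorem eq_of_periodic_of_modEq {α : Type*} {k : ℤ} {g : ℤ → α} (hg : Function.Periodic g k)
    {x y : ℤ} (hxy : x ≡ y [ZMOD k]) : g x = g y := by
  obtain ⟨c, hc⟩ := hxy.dvd
  rw [← hg.int_mul c x, Int.cast_id, show x + c * k = y by linear_combination -hc]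

variable {k : ℕ} [NeZero k]

theorem sum_range_affine_of_periodic {M : Type*} [AddCommMonoid M] {g : ℤ → M}
    (hg : Function.Periodic g k) {u : ℤ} (hu : IsCoprime u k) (c : ℤ) :
    ∑ l ∈ Finset.range k, g (u * l + c) = ∑ l ∈ Finset.range k, g l := by
  have sum_range_eq (f : ℕ → M) : ∑ l ∈ Finset.range k, f l = ∑ z : ZMod k, f z.val := by
    obtain ⟨n, rfl⟩ := Nat.exists_eq_succ_of_ne_zero (NeZero.ne k)
    exact (Fin.sum_univ_eq_sum_range f _).symm
  let affine : ZMod k ≃ ZMod k :=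
    (Units.mulLeft ((ZMod.coe_int_isUnit_iff_isCoprime u k).2 hu.symm).unit).trans
      (Equiv.addRight (c : ZMod k))
  rw [sum_range_eq fun l => g (u * l + c), sum_range_eq fun l => g l,
    ← affine.sum_comp fun z => g z.val]
  refine Finset.sum_congr rfl fun z _ => eq_of_periodic_of_modEq hg ?_
  rw [← ZMod.intCast_eq_intCast_iff]
  simp [affine]

theorem sum_range_eq_zero_of_quasiperiodic {R : Type*} [Ring R] [NoZeroDivisors R] {g : ℤ → R}
    (hg : Function.Periodic g k) {ζ : R} (hζ : ζ ≠ 1) (c : ℤ) (hgc : ∀ l, g (l + c) = ζ * g l) :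
    ∑ l ∈ Finset.range k, g l = 0 := by
  have invariant := sum_range_affine_of_periodic hg isCoprime_one_left c
  simp only [one_mul, hgc, ← Finset.mul_sum] at invariant
  exact (mul_left_eq_self₀.1 invariant).resolve_left hζ

end PeriodicSum

section BinaryGaussSum

/-- The summand `e((h/k)(m₁x²/N₁ + xy + m₃y²/N₂))`: for `x = N₁(ℓ₁ + α₁)` and `y = N₂(ℓ₂ + α₂)` it
is the summand `e((h/k) L Q(ℓ + α))` of the Gauss sums of the theorem. -/
noncomputable def gaussPhase (N₁ N₂ : ℕ) (m₁ m₃ h : ℤ) (k : ℕ) (x y : ℤ) : ℂ :=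
  eQ ((h : ℚ) / k * (m₁ * (x : ℚ) ^ 2 / N₁ + x * y + m₃ * (y : ℚ) ^ 2 / N₂))

/-- The binary Gauss sum at the point `(a/N₁, b/N₂)`, with denominators cleared so that the point is
given by the integers `a` and `b`. -/
noncomputable def binaryGaussSum (N₁ N₂ : ℕ) (m₁ m₃ h : ℤ) (k : ℕ) (a b : ℤ) : ℂ :=
  ∑ l₁ ∈ Finset.range k, ∑ l₂ ∈ Finset.range k,
    gaussPhase N₁ N₂ m₁ m₃ h k (a + N₁ * l₁) (b + N₂ * l₂)

variable {N₁ N₂ k : ℕ} {m₁ m₃ h : ℤ}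

theorem eQ_mul_form_eq_gaussPhase [NeZero N₁] [NeZero N₂] {L R₁ R₂ : ℕ} (hR₁ : N₁ = L * R₁)
    (hR₂ : N₂ = L * R₂) (a b l₁ l₂ : ℤ) :
    eQ ((h : ℚ) / k * L * (R₁ * m₁ * (l₁ + a / N₁ : ℚ) ^ 2 +
      L * R₁ * R₂ * (l₁ + a / N₁) * (l₂ + b / N₂) + R₂ * m₃ * (l₂ + b / N₂ : ℚ) ^ 2)) =
      gaussPhase N₁ N₂ m₁ m₃ h k (a + N₁ * l₁) (b + N₂ * l₂) := by
  have hLR₁ : (L * R₁ : ℚ) ≠ 0 := by exact_mod_cast hR₁ ▸ NeZero.ne N₁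
  have hLR₂ : (L * R₂ : ℚ) ≠ 0 := by exact_mod_cast hR₂ ▸ NeZero.ne N₂
  obtain ⟨hL₀, hR₁₀⟩ := mul_ne_zero_iff.1 hLR₁
  have hR₂₀ := (mul_ne_zero_iff.1 hLR₂).2
  rw [gaussPhase, hR₁, hR₂]
  congr 1
  push_cast
  field_simp
  ring

theorem gaussPhase_comm (x y : ℤ) :
    gaussPhase N₁ N₂ m₁ m₃ h k x y = gaussPhase N₂ N₁ m₃ m₁ h k y x := by
  unfold gaussPhase
  congr 1
  ring

theorem binaryGaussSum_comm (a b : ℤ) :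
    binaryGaussSum N₁ N₂ m₁ m₃ h k a b = binaryGaussSum N₂ N₁ m₃ m₁ h k b a := by
  unfold binaryGaussSum
  rw [Finset.sum_comm]
  simp only [gaussPhase_comm (N₁ := N₁)]

theorem gaussPhase_congr [NeZero N₁] [NeZero N₂] [NeZero k] {x x' y y' : ℤ}
    (hx : x ^ 2 ≡ x' ^ 2 [ZMOD k * N₁]) (hy : y ^ 2 ≡ y' ^ 2 [ZMOD k * N₂])
    (hxy : x * y ≡ x' * y' [ZMOD k]) :
    gaussPhase N₁ N₂ m₁ m₃ h k x y = gaussPhase N₁ N₂ m₁ m₃ h k x' y' := by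
  obtain ⟨c, hc⟩ := hx.symm.dvd
  obtain ⟨d, hd⟩ := hy.symm.dvd
  obtain ⟨e, he⟩ := hxy.symm.dvd
  have hc' : (x : ℚ) ^ 2 = x' ^ 2 + k * N₁ * c := by exact_mod_cast eq_add_of_sub_eq' hc
  have hd' : (y : ℚ) ^ 2 = y' ^ 2 + k * N₂ * d := by exact_mod_cast eq_add_of_sub_eq' hd
  have he' : (x * y : ℚ) = x' * y' + k * e := by exact_mod_cast eq_add_of_sub_eq' he
  have hN₁ : (N₁ : ℚ) ≠ 0 := NeZero.ne _
  have hN₂ : (N₂ : ℚ) ≠ 0 := NeZero.ne _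
  have hk : (k : ℚ) ≠ 0 := NeZero.ne _
  unfold gaussPhase
  refine Eq.trans ?_ (eQ_add_intCast _ (h * (m₁ * c + e + m₃ * d)))
  rw [hc', hd', he']
  congr 1
  push_cast
  field_simp
  ring

theorem gaussPhase_periodic_left [NeZero N₁] [NeZero N₂] [NeZero k] (a y : ℤ) :
    Function.Periodic (fun l => gaussPhase N₁ N₂ m₁ m₃ h k (a + N₁ * l) y) k := by
  refine fun l => gaussPhase_congr ?_ rfl ?_ <;> refine (Int.modEq_iff_dvd.2 ?_).symm
  · exact ⟨2 * (a + N₁ * l) + N₁ * k, by ring⟩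
  · exact ⟨N₁ * y, by ring⟩

theorem gaussPhase_periodic_right [NeZero N₁] [NeZero N₂] [NeZero k] (x b : ℤ) :
    Function.Periodic (fun l => gaussPhase N₁ N₂ m₁ m₃ h k x (b + N₂ * l)) k := by
  simpa only [gaussPhase_comm x] using gaussPhase_periodic_left b x

theorem isCoprime_of_sq_modEq_one {u n : ℤ} (hu : u ^ 2 ≡ 1 [ZMOD n]) : IsCoprime u n := by
  obtain ⟨d, hd⟩ := hu.dvd
  exact ⟨u, d, by linear_combination -hd⟩

theorem binaryGaussSum_eq_of_modEq_mul [NeZero N₁] [NeZero N₂] [NeZero k] {u w a a' b b' : ℤ}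
    (hu : u ^ 2 ≡ 1 [ZMOD k * N₁]) (hw : w ^ 2 ≡ 1 [ZMOD k * N₂]) (huw : u * w ≡ 1 [ZMOD k])
    (ha : u * a ≡ a' [ZMOD N₁]) (hb : w * b ≡ b' [ZMOD N₂]) :
    binaryGaussSum N₁ N₂ m₁ m₃ h k a b = binaryGaussSum N₁ N₂ m₁ m₃ h k a' b' := by
  obtain ⟨c, hc⟩ := ha.symm.dvd
  obtain ⟨d, hd⟩ := hb.symm.dvd
  have phase_mul (x y : ℤ) :
      gaussPhase N₁ N₂ m₁ m₃ h k x y = gaussPhase N₁ N₂ m₁ m₃ h k (u * x) (w * y) := by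
    refine (gaussPhase_congr ?_ ?_ ?_).symm
    · simpa [mul_pow] using hu.mul_right (x ^ 2)
    · simpa [mul_pow] using hw.mul_right (y ^ 2)
    · simpa [mul_mul_mul_comm] using huw.mul_right (x * y)
  calc binaryGaussSum N₁ N₂ m₁ m₃ h k a b
      = ∑ l₁ ∈ Finset.range k, ∑ l₂ ∈ Finset.range k,
          gaussPhase N₁ N₂ m₁ m₃ h k (a' + N₁ * (u * l₁ + c)) (b' + N₂ * (w * l₂ + d)) := by
        refine Finset.sum_congr rfl fun l₁ _ => Finset.sum_congr rfl fun l₂ _ => ?_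
        rw [phase_mul]
        congr 1
        · linear_combination hc
        · linear_combination hd
    _ = ∑ l₁ ∈ Finset.range k, ∑ l₂ ∈ Finset.range k,
          gaussPhase N₁ N₂ m₁ m₃ h k (a' + N₁ * (u * l₁ + c)) (b' + N₂ * l₂) :=
        Finset.sum_congr rfl fun l₁ _ => sum_range_affine_of_periodic
          (gaussPhase_periodic_right _ b') (isCoprime_of_sq_modEq_one hw).of_mul_right_left d
    _ = binaryGaussSum N₁ N₂ m₁ m₃ h k a' b' :=
        sum_range_affine_of_periodic
          (g := fun l => ∑ l₂ ∈ Finset.range k,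
            gaussPhase N₁ N₂ m₁ m₃ h k (a' + N₁ * l) (b' + N₂ * l₂))
          (fun l => Finset.sum_congr rfl fun l₂ _ => gaussPhase_periodic_left a' _ l)
          (isCoprime_of_sq_modEq_one hu).of_mul_right_left c

theorem binaryGaussSum_congr [NeZero N₁] [NeZero N₂] [NeZero k] {a a' b b' : ℤ}
    (ha : a ≡ a' [ZMOD N₁]) (hb : b ≡ b' [ZMOD N₂]) :
    binaryGaussSum N₁ N₂ m₁ m₃ h k a b = binaryGaussSum N₁ N₂ m₁ m₃ h k a' b' :=
  binaryGaussSum_eq_of_modEq_mul (u := 1) (w := 1) rfl rfl rfl (by simpa) (by simpa)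

theorem binaryGaussSum_neg_neg [NeZero N₁] [NeZero N₂] [NeZero k] (a b : ℤ) :
    binaryGaussSum N₁ N₂ m₁ m₃ h k (-a) (-b) = binaryGaussSum N₁ N₂ m₁ m₃ h k a b :=
  binaryGaussSum_eq_of_modEq_mul (u := -1) (w := -1) (by simp) (by simp) (by simp) (by simp)
    (by simp)

/-- Shifting `ℓ₁` by `k / d` multiplies each summand by the same nontrivial `d`-th root of unity. -/
theorem binaryGaussSum_eq_zero [NeZero N₁] [NeZero N₂] [NeZero k] {d : ℕ} (hdN₁ : d ∣ N₁)
    (hdk : d ∣ k) {a : ℤ} (ha : ¬ (d : ℤ) ∣ 2 * h * m₁ * a) (b : ℤ) :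
    binaryGaussSum N₁ N₂ m₁ m₃ h k a b = 0 := by
  unfold binaryGaussSum
  rw [Finset.sum_comm]
  refine Finset.sum_eq_zero fun l₂ _ => ?_
  obtain ⟨n, hn⟩ := hdN₁
  obtain ⟨c, hc⟩ := hdk
  have hdn : (d * n : ℚ) ≠ 0 := by exact_mod_cast hn ▸ NeZero.ne N₁
  have hdc : (d * c : ℚ) ≠ 0 := by exact_mod_cast hc ▸ NeZero.ne k
  obtain ⟨hd₀, hn₀⟩ := mul_ne_zero_iff.1 hdn
  have hc₀ := (mul_ne_zero_iff.1 hdc).2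
  have root_ne_one : eQ ((2 * h * m₁ * a : ℤ) / (d : ℚ)) ≠ 1 := by
    rw [Ne, eQ_eq_one_iff]
    rintro ⟨q, hq⟩
    refine ha ⟨q, ?_⟩
    rw [div_eq_iff hd₀, mul_comm (q : ℚ)] at hq
    exact_mod_cast hq
  refine sum_range_eq_zero_of_quasiperiodic (gaussPhase_periodic_left a _) root_ne_one c fun l => ?_
  unfold gaussPhase
  rw [← eQ_add]
  refine Eq.trans ?_ (eQ_add_intCast _ (h * (2 * m₁ * n * l + m₁ * n * c + n * (b + N₂ * l₂))))
  rw [hn, hc]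
  congr 1
  push_cast
  field_simp
  ring

end BinaryGaussSum

section LocalSigns

theorem int_modEq_of_forall_prime_pow {n : ℕ} {x y : ℤ}
    (hxy : ∀ p e : ℕ, p.Prime → p ∣ n → p ^ e ∣ n → x ≡ y [ZMOD (p : ℤ) ^ e]) :
    x ≡ y [ZMOD n] := by
  rw [Int.modEq_iff_dvd, Int.natCast_dvd, Nat.dvd_iff_prime_pow_dvd_dvd]
  intro p e hp he
  rcases eq_or_ne e 0 with rfl | he₀
  · simp
  rw [← Int.natCast_dvd]
  exact_mod_cast (hxy p e hp ((dvd_pow_self p he₀).trans he) he).dvd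

theorem exists_int_forall_prime_pow_modEq {n : ℕ} (hn : n ≠ 0) (ε : ℕ → ℤ) :
    ∃ u : ℤ, ∀ p e : ℕ, p.Prime → p ^ e ∣ n → u ≡ ε p [ZMOD (p : ℤ) ^ e] := by
  obtain ⟨u, hu⟩ := IsDedekindDomain.exists_forall_sub_mem_ideal (s := n.primeFactors)
    (fun p => Ideal.span {(p : ℤ)}) n.factorization
    (fun p hp => (Ideal.prime_span_singleton_iff).2
      (Nat.prime_iff_prime_int.1 (Nat.prime_of_mem_primeFactors hp)))
    (fun p _ q _ hpq h => hpq (by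
      simpa [Int.associated_iff_natAbs] using Ideal.span_singleton_eq_span_singleton.1 h))
    (fun p => ε p)
  refine ⟨u, fun p e hp hpe => ?_⟩
  rcases e.eq_zero_or_pos with rfl | he
  · simpa using Int.modEq_one
  have hpn : p ∈ n.primeFactors :=
    Nat.mem_primeFactors.2 ⟨hp, (dvd_pow_self p he.ne').trans hpe, hn⟩
  have hmem := hu p hpn
  rw [Ideal.span_singleton_pow, Ideal.mem_span_singleton] at hmem
  exact (Int.modEq_iff_dvd.2 ((pow_dvd_pow _ ((hp.pow_dvd_iff_le_factorization hn).1 hpe)).trans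
    hmem)).symm

/-- Working with the halves `x = (s - r) / 2` and `y = (s + r) / 2` covers `p = 2` as well: `p`
cannot divide both since `x + y = s`, while `p ^ v ∣ 2xy`. -/
theorem prime_pow_dvd_sub_or_dvd_add {p r s : ℤ} (hp : Prime p) {v : ℕ} (hs : ¬ p ∣ s)
    (hrs : 2 * p ^ v ∣ s ^ 2 - r ^ 2) : p ^ v ∣ s - r ∨ p ^ v ∣ s + r := by
  have parity : Even (s - r) := by
    have : Even (s ^ 2 - r ^ 2) := even_iff_two_dvd.2 ((dvd_mul_right _ _).trans hrs)
    simpa [parity_simps] using this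
  obtain ⟨x, hx⟩ := even_iff_two_dvd.1 parity
  obtain ⟨y, hxy⟩ : ∃ y, x + y = s := ⟨s - x, add_sub_cancel x s⟩
  have hy : s + r = 2 * y := by linear_combination -2 * hxy - hx
  have product : p ^ v ∣ 2 * x * y := by
    have factored : s ^ 2 - r ^ 2 = 2 * (2 * x * y) := by
      linear_combination (s + r) * hx + 2 * x * hy
    exact (mul_dvd_mul_iff_left two_ne_zero).1 (factored ▸ hrs)
  by_cases hpx : p ∣ x
  · have hpy : ¬ p ∣ y := fun hpy => hs (hxy ▸ dvd_add hpx hpy)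
    exact Or.inl (hx ▸ hp.pow_dvd_of_dvd_mul_right v hpy product)
  · rw [mul_assoc, mul_left_comm] at product
    exact Or.inr (hy ▸ hp.pow_dvd_of_dvd_mul_left v hpx product)

/-- When both signs solve the congruences, as may happen for `p = 2`, the last clause breaks the
tie. -/
theorem exists_local_sign {n : ℕ} (hn : n ≠ 0) {r s : ℤ} (hs : IsCoprime s n)
    (hrs : r ^ 2 ≡ s ^ 2 [ZMOD 2 * n]) {p : ℕ} (hp : p.Prime) :
    ∃ ε : ℤ, ε ^ 2 = 1 ∧ (∀ e, p ^ e ∣ n → ε * r ≡ s [ZMOD (p : ℤ) ^ e]) ∧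
      ((∀ e, p ^ e ∣ n → r ≡ s [ZMOD (p : ℤ) ^ e]) → ε = 1) := by
  by_cases hone : ∀ e, p ^ e ∣ n → r ≡ s [ZMOD (p : ℤ) ^ e]
  · exact ⟨1, one_pow 2, by simpa using hone, fun _ => rfl⟩
  refine ⟨-1, by norm_num, fun e he => ?_, fun h => absurd h hone⟩
  set v := n.factorization p
  have dvd_v {e : ℕ} (he : p ^ e ∣ n) : (p : ℤ) ^ e ∣ (p : ℤ) ^ v :=
    pow_dvd_pow _ ((hp.pow_dvd_iff_le_factorization hn).1 he)
  have hv : (p : ℤ) ^ v ∣ n := by exact_mod_cast n.ordProj_dvd p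
  have not_dvd_sub : ¬ (p : ℤ) ^ v ∣ s - r := fun hsub =>
    hone fun e he => Int.modEq_iff_dvd.2 ((dvd_v he).trans hsub)
  have hpn : (p : ℤ) ∣ n := (dvd_pow_self _ fun hv₀ => not_dvd_sub (by simp [hv₀])).trans hv
  have hp' : Prime (p : ℤ) := Nat.prime_iff_prime_int.1 hp
  have hps : ¬ (p : ℤ) ∣ s := fun hps => hp'.not_isUnit (hs.isUnit_of_dvd' hps hpn)
  have dvd_add : (p : ℤ) ^ v ∣ s + r :=
    (prime_pow_dvd_sub_or_dvd_add hp' hps ((mul_dvd_mul_left 2 hv).trans hrs.dvd)).resolve_left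
      not_dvd_sub
  simpa [Int.modEq_iff_dvd] using (dvd_v he).trans dvd_add

/-- At each prime `p`, the residue of `u` is the sign carrying `r` to `s`, and `w` copies that sign
if `p ∣ k` but is `1` otherwise. -/
theorem exists_sign_multipliers {N₁ N₂ k : ℕ} (hN₁ : N₁ ≠ 0) (hN₂ : N₂ ≠ 0) (hk : k ≠ 0)
    (hcop : ∀ p : ℕ, p.Prime → Odd p → p ∣ N₁ → p ∣ N₂ → ¬ p ∣ k) {r s : ℤ}
    (hs : IsCoprime s N₁) (hrs : r ^ 2 ≡ s ^ 2 [ZMOD 2 * N₁])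
    (htwo : ∀ e, 2 ^ e ∣ N₁ → r ≡ s [ZMOD 2 ^ e]) :
    ∃ u w : ℤ, u ^ 2 ≡ 1 [ZMOD k * N₁] ∧ w ^ 2 ≡ 1 [ZMOD k * N₂] ∧ u * w ≡ 1 [ZMOD k] ∧
      u * r ≡ s [ZMOD N₁] ∧ w ≡ 1 [ZMOD N₂] := by
  choose! ε ε_sq ε_mul ε_one using fun (p : ℕ) (hp : p.Prime) =>
    exists_local_sign hN₁ hs hrs hp
  obtain ⟨u, hu⟩ := exists_int_forall_prime_pow_modEq (mul_ne_zero hk hN₁) ε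
  obtain ⟨w, hw⟩ := exists_int_forall_prime_pow_modEq (mul_ne_zero hk hN₂)
    fun p => if p ∣ k then ε p else 1
  have sign_eq_one {p : ℕ} (hp : p.Prime) (hpN₂ : p ∣ N₂) (hpk : p ∣ k) : ε p = 1 := by
    refine ε_one p hp fun e he => ?_
    rcases hp.eq_two_or_odd' with rfl | hodd
    · exact_mod_cast htwo e he
    rcases eq_or_ne e 0 with rfl | he₀
    · simpa using Int.modEq_one
    · exact absurd hpk (hcop p hp hodd ((dvd_pow_self p he₀).trans he) hpN₂)
  refine ⟨u, w, ?_, ?_, ?_, ?_, ?_⟩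
  · rw [← Nat.cast_mul]
    refine int_modEq_of_forall_prime_pow fun p e hp _ he => ?_
    simpa [ε_sq p hp] using (hu p e hp he).pow 2
  · rw [← Nat.cast_mul]
    refine int_modEq_of_forall_prime_pow fun p e hp _ he => ?_
    have hw_sq := (hw p e hp he).pow 2
    split_ifs at hw_sq <;> simpa [ε_sq p hp] using hw_sq
  · refine int_modEq_of_forall_prime_pow fun p e hp hpk he => ?_
    simpa [hpk, ← sq, ε_sq p hp] using
      (hu p e hp (he.mul_right N₁)).mul (hw p e hp (he.mul_right N₂))
  · refine int_modEq_of_forall_prime_pow fun p e hp _ he => ?_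
    exact ((hu p e hp (he.mul_left k)).mul_right r).trans (ε_mul p hp e he)
  · refine int_modEq_of_forall_prime_pow fun p e hp hpN₂ he => ?_
    have hw_mod := hw p e hp (he.mul_left k)
    split_ifs at hw_mod with hpk
    · exact sign_eq_one hp hpN₂ hpk ▸ hw_mod
    · exact hw_mod

end LocalSigns

section SymmetrizedSum

variable {N₁ N₂ k : ℕ} [NeZero N₁] [NeZero N₂] [NeZero k] {m₁ m₃ h : ℤ}

theorem exists_sign_binaryGaussSum_eq (hcop : ∀ p : ℕ, p.Prime → Odd p → p ∣ N₁ → p ∣ N₂ → ¬ p ∣ k)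
    {r s : ℤ} (hs : IsCoprime s N₁) (hrs : r ^ 2 ≡ s ^ 2 [ZMOD 2 * N₁]) :
    ∃ δ : ℤ, δ ^ 2 = 1 ∧
      ∀ b, binaryGaussSum N₁ N₂ m₁ m₃ h k (δ * r) b = binaryGaussSum N₁ N₂ m₁ m₃ h k s b := by
  obtain ⟨δ, hδ, hδrs, -⟩ := exists_local_sign (NeZero.ne N₁) hs hrs Nat.prime_two
  obtain ⟨u, w, hu, hw, huw, hur, hw_one⟩ := exists_sign_multipliers (NeZero.ne N₁) (NeZero.ne N₂)
    (NeZero.ne k) hcop hs (r := δ * r) (by simpa [mul_pow, hδ] using hrs) hδrs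
  exact ⟨δ, hδ, fun b =>
    binaryGaussSum_eq_of_modEq_mul hu hw huw hur (by simpa using hw_one.mul_right b)⟩

theorem binaryGaussSum_eq_zero_of_prime {p : ℕ} (hp : p.Prime) (hodd : Odd p) (hpN₁ : p ∣ N₁)
    (hpk : p ∣ k) (hhk : IsCoprime h k) (hpm₁ : ¬ (p : ℤ) ∣ m₁) {a : ℤ} (ha : IsCoprime a N₁)
    (b : ℤ) : binaryGaussSum N₁ N₂ m₁ m₃ h k a b = 0 := by
  have hp' : Prime (p : ℤ) := Nat.prime_iff_prime_int.1 hp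
  refine binaryGaussSum_eq_zero hpN₁ hpk ?_ b
  simp only [hp'.dvd_mul, not_or]
  refine ⟨⟨⟨fun h2 => ?_, fun hph => ?_⟩, hpm₁⟩, fun hpa => ?_⟩
  · exact absurd ((Nat.prime_dvd_prime_iff_eq hp Nat.prime_two).1 (by exact_mod_cast h2))
      (by rintro rfl; exact absurd hodd (by decide))
  · exact hp'.not_isUnit (hhk.isUnit_of_dvd' hph (Int.natCast_dvd_natCast.2 hpk))
  · exact hp'.not_isUnit (ha.isUnit_of_dvd' hpa (Int.natCast_dvd_natCast.2 hpN₁))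

theorem binaryGaussSum_add_neg_eq (hhk : IsCoprime h k)
    (hcop : ∀ p : ℕ, p.Prime → Odd p → p ∣ N₁ → p ∣ N₂ → p ∣ k → (p : ℤ) ∣ m₁ → ¬ (p : ℤ) ∣ m₃)
    {r s x : ℤ} (hr : IsCoprime r N₁) (hs : IsCoprime s N₁) (hx : IsCoprime x N₂)
    (hrs : r ^ 2 ≡ s ^ 2 [ZMOD 2 * N₁]) :
    binaryGaussSum N₁ N₂ m₁ m₃ h k r x + binaryGaussSum N₁ N₂ m₁ m₃ h k (-r) x =
      binaryGaussSum N₁ N₂ m₁ m₃ h k s x + binaryGaussSum N₁ N₂ m₁ m₃ h k (-s) x := by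
  by_cases hbad : ∃ p : ℕ, p.Prime ∧ Odd p ∧ p ∣ N₁ ∧ p ∣ N₂ ∧ p ∣ k
  · obtain ⟨p, hp, hodd, hpN₁, hpN₂, hpk⟩ := hbad
    by_cases hpm₁ : (p : ℤ) ∣ m₁
    · have hpm₃ := hcop p hp hodd hpN₁ hpN₂ hpk hpm₁
      have vanish (a : ℤ) : binaryGaussSum N₁ N₂ m₁ m₃ h k a x = 0 := by
        rw [binaryGaussSum_comm]
        exact binaryGaussSum_eq_zero_of_prime hp hodd hpN₂ hpk hhk hpm₃ hx a
      simp only [vanish]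
    · have vanish {a : ℤ} (ha : IsCoprime a N₁) : binaryGaussSum N₁ N₂ m₁ m₃ h k a x = 0 :=
        binaryGaussSum_eq_zero_of_prime hp hodd hpN₁ hpk hhk hpm₁ ha x
      rw [vanish hr, vanish hr.neg_left, vanish hs, vanish hs.neg_left]
  · push Not at hbad
    obtain ⟨δ, hδ, hδrs⟩ := exists_sign_binaryGaussSum_eq (m₁ := m₁) (m₃ := m₃) (h := h) hbad hs hrs
    have hδrs_neg : binaryGaussSum N₁ N₂ m₁ m₃ h k (-(δ * r)) x =
        binaryGaussSum N₁ N₂ m₁ m₃ h k (-s) x := by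
      simpa only [← binaryGaussSum_neg_neg _ x, neg_neg] using hδrs (-x)
    rw [← hδrs x, ← hδrs_neg]
    rcases sq_eq_one_iff.1 hδ with rfl | rfl
    · simp only [one_mul]
    · simp only [neg_one_mul, neg_neg, add_comm]

theorem sum_pt_eq_two_mul {S : ℚ → ℚ → ℂ} (hS : ∀ a b : ℤ,
      S ((a : ℚ) / N₁) ((b : ℚ) / N₂) = binaryGaussSum N₁ N₂ m₁ m₃ h k a b) (x y : ℕ) :
    ∑ i : Fin 2, ∑ j : Fin 2, S (pt x N₁ i) (pt y N₂ j) =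
      2 * (binaryGaussSum N₁ N₂ m₁ m₃ h k x y + binaryGaussSum N₁ N₂ m₁ m₃ h k (-x) y) := by
  have pt_one (x N : ℕ) [NeZero N] : pt x N 1 = ((N - x : ℤ) : ℚ) / N := by
    have : (N : ℚ) ≠ 0 := NeZero.ne _
    simp [pt, sub_div, this]
  have pt_zero (x N : ℕ) : pt x N 0 = ((x : ℤ) : ℚ) / N := by simp [pt]
  have sub_modEq (x N : ℕ) : (N - x : ℤ) ≡ -x [ZMOD N] :=
    Int.modEq_iff_dvd.2 ⟨-1, by ring⟩
  simp only [Fin.sum_univ_two, pt_zero, pt_one, hS]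
  rw [binaryGaussSum_congr (a := x) rfl (sub_modEq y N₂),
    binaryGaussSum_congr (b := y) (sub_modEq x N₁) rfl,
    binaryGaussSum_congr (sub_modEq x N₁) (sub_modEq y N₂), binaryGaussSum_neg_neg,
    ← binaryGaussSum_neg_neg x (-y), neg_neg]
  ring

theorem sum_pt_eq_of_sq_modEq {S : ℚ → ℚ → ℂ} (hS : ∀ a b : ℤ,
      S ((a : ℚ) / N₁) ((b : ℚ) / N₂) = binaryGaussSum N₁ N₂ m₁ m₃ h k a b) (hhk : IsCoprime h k)
    (hcop : ∀ p : ℕ, p.Prime → Odd p → p ∣ N₁ → p ∣ N₂ → p ∣ k → (p : ℤ) ∣ m₁ → ¬ (p : ℤ) ∣ m₃)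
    {r s x : ℕ} (hr : r.Coprime N₁) (hs : s.Coprime N₁) (hx : x.Coprime N₂)
    (hrs : (r : ℤ) ^ 2 ≡ (s : ℤ) ^ 2 [ZMOD 2 * N₁]) :
    ∑ i : Fin 2, ∑ j : Fin 2, S (pt r N₁ i) (pt x N₂ j) =
      ∑ i : Fin 2, ∑ j : Fin 2, S (pt s N₁ i) (pt x N₂ j) := by
  rw [sum_pt_eq_two_mul hS, sum_pt_eq_two_mul hS,
    binaryGaussSum_add_neg_eq hhk hcop (Nat.isCoprime_iff_coprime.2 hr)
      (Nat.isCoprime_iff_coprime.2 hs) (Nat.isCoprime_iff_coprime.2 hx) hrs]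

end SymmetrizedSum

theorem family_gauss_sum_vanishes_general
    (N₁ N₂ L R₁ R₂ : ℕ) (μ₁ μ₃ : ℤ) (σ₂ : ℚ)
    (hN₁ : 0 < N₁) (hN₂ : 0 < N₂) (hR₁ : N₁ = L * R₁) (hR₂ : N₂ = L * R₂)
    (hσ₂ : 2 * σ₂ = (L : ℚ) * R₁ * R₂)
    (r₁ s₁ r₂ s₂ : ℕ)
    (hr₁c : Nat.gcd r₁ N₁ = 1) (hs₁c : Nat.gcd s₁ N₁ = 1)
    (hr₂c : Nat.gcd r₂ N₂ = 1) (hs₂c : Nat.gcd s₂ N₂ = 1)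
    (hrs₁ : (r₁ : ℤ) ^ 2 ≡ (s₁ : ℤ) ^ 2 [ZMOD (2 * N₁)])
    (h : ℤ) (k : ℕ) (hk : 0 < k) (hhk : Int.gcd h (k : ℤ) = 1)
    (hμ : ∀ p : ℕ, p.Prime → Odd p → p ∣ N₁ → p ∣ N₂ → p ∣ k → (p : ℤ) ∣ μ₁ → ¬ (p : ℤ) ∣ μ₃)
    (Q : ℚ → ℚ → ℚ)
    (hQ : ∀ x y : ℚ, Q x y = R₁ * μ₁ * x ^ 2 + 2 * σ₂ * x * y + R₂ * μ₃ * y ^ 2)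
    (S : ℚ → ℚ → ℂ)
    (hS : ∀ α₁ α₂ : ℚ, S α₁ α₂ = ∑ ℓ₁ ∈ Finset.range k, ∑ ℓ₂ ∈ Finset.range k,
      eQ ((h : ℚ) / (k : ℚ) * L * Q ((ℓ₁ : ℚ) + α₁) ((ℓ₂ : ℚ) + α₂))) :
    (∑ i : Fin 2, ∑ j : Fin 2,
        (S (pt r₁ N₁ i) (pt r₂ N₂ j) + S (pt s₁ N₁ i) (pt s₂ N₂ j))) -
      (∑ i : Fin 2, ∑ j : Fin 2,
        (S (pt r₁ N₁ i) (pt s₂ N₂ j) + S (pt s₁ N₁ i) (pt r₂ N₂ j))) = 0 := by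
  have : NeZero N₁ := ⟨hN₁.ne'⟩
  have : NeZero N₂ := ⟨hN₂.ne'⟩
  have : NeZero k := ⟨hk.ne'⟩
  have S_eq (a b : ℤ) :
      S ((a : ℚ) / N₁) ((b : ℚ) / N₂) = binaryGaussSum N₁ N₂ μ₁ μ₃ h k a b := by
    simp only [hS, hQ, hσ₂, binaryGaussSum, ← eQ_mul_form_eq_gaussPhase hR₁ hR₂, Int.cast_natCast]
  have replace_r₁ {x : ℕ} (hx : Nat.gcd x N₂ = 1) := sum_pt_eq_of_sq_modEq S_eq
    (Int.isCoprime_iff_gcd_eq_one.2 hhk) hμ hr₁c hs₁c hx hrs₁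
  simp only [Finset.sum_add_distrib, replace_r₁ hr₂c, replace_r₁ hs₂c]
  ring

theorem family_gauss_sum_vanishes
    (N₁ N₂ L R₁ R₂ μ₁ μ₃ : ℕ) (σ₂ : ℚ)
    (hN₁ : 0 < N₁) (hN₂ : 0 < N₂) (hN₁e : Even N₁) (hN₂e : Even N₂)
    (hL : L = Nat.gcd N₁ N₂) (hR₁ : N₁ = L * R₁) (hR₂ : N₂ = L * R₂)
    (hμ₁ : 0 < μ₁) (hμ₃ : 0 < μ₃)
    (hcop₁ : Nat.gcd R₁ μ₁ = 1) (hcop₃ : Nat.gcd R₂ μ₃ = 1)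
    (hσ₂ : 2 * σ₂ = (L : ℚ) * R₁ * R₂)
    (hodd : ∀ p q : ℕ, p.Prime → q.Prime → Odd p → Odd q →
      p ∣ Nat.gcd μ₁ μ₃ → q ∣ Nat.gcd μ₁ μ₃ → p = q)
    (hLμ : Nat.gcd L (Nat.gcd μ₁ μ₃) = 1)
    (h4L : ¬ (4 ∣ L) →
      (Even R₁ ∧ ¬ Even R₂ ∧ ¬ Even μ₃) ∨ (¬ Even R₁ ∧ Even R₂ ∧ ¬ Even μ₃) ∨
        (¬ Even R₁ ∧ ¬ Even R₂ ∧ Even μ₃))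
    (r₁ s₁ r₂ s₂ : ℕ) (hr₁ : 0 < r₁) (hs₁ : 0 < s₁) (hr₂ : 0 < r₂) (hs₂ : 0 < s₂)
    (hr₁c : Nat.gcd r₁ N₁ = 1) (hs₁c : Nat.gcd s₁ N₁ = 1)
    (hr₂c : Nat.gcd r₂ N₂ = 1) (hs₂c : Nat.gcd s₂ N₂ = 1)
    (hrs₁ : (r₁ : ℤ) ^ 2 ≡ (s₁ : ℤ) ^ 2 [ZMOD (2 * N₁)])
    (hrs₂ : (r₂ : ℤ) ^ 2 ≡ (s₂ : ℤ) ^ 2 [ZMOD (2 * N₂)])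
    (h : ℤ) (k : ℕ) (hk : 0 < k) (hhk : Int.gcd h (k : ℤ) = 1)
    -- the quadratic form `Q(x,y) = σ₁x² + 2σ₂xy + σ₃y²` with `σ₁ = R₁μ₁`, `σ₃ = R₂μ₃`
    (Q : ℚ → ℚ → ℚ)
    (hQ : ∀ x y : ℚ, Q x y = (R₁ * μ₁ : ℕ) * x ^ 2 + 2 * σ₂ * x * y + (R₂ * μ₃ : ℕ) * y ^ 2)
    -- `S α` is the inner sum over `ℓ ∈ {0,…,k−1}²`
    (S : ℚ → ℚ → ℂ)
    (hS : ∀ α₁ α₂ : ℚ, S α₁ α₂ = ∑ ℓ₁ ∈ Finset.range k, ∑ ℓ₂ ∈ Finset.range k,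
      eQ ((h : ℚ) / (k : ℚ) * L * Q ((ℓ₁ : ℚ) + α₁) ((ℓ₂ : ℚ) + α₂))) :
    (∑ i : Fin 2, ∑ j : Fin 2,
        (S (pt r₁ N₁ i) (pt r₂ N₂ j) + S (pt s₁ N₁ i) (pt s₂ N₂ j))) -
      (∑ i : Fin 2, ∑ j : Fin 2,
        (S (pt r₁ N₁ i) (pt s₂ N₂ j) + S (pt s₁ N₁ i) (pt r₂ N₂ j))) = 0 := by
  have hμ (p : ℕ) (hp : p.Prime) (hpN₁ : p ∣ N₁) (hpN₂ : p ∣ N₂) (hpμ₁ : p ∣ μ₁) : ¬ p ∣ μ₃ :=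
    fun hpμ₃ => Nat.not_coprime_of_dvd_of_dvd hp.one_lt (hL ▸ Nat.dvd_gcd hpN₁ hpN₂)
      (Nat.dvd_gcd hpμ₁ hpμ₃) hLμ
  exact family_gauss_sum_vanishes_general N₁ N₂ L R₁ R₂ μ₁ μ₃ σ₂ hN₁ hN₂ hR₁ hR₂ hσ₂ r₁ s₁ r₂ s₂
    hr₁c hs₁c hr₂c hs₂c hrs₁ h k hk hhk
    (fun p hp _ hpN₁ hpN₂ _ => by exact_mod_cast hμ p hp hpN₁ hpN₂) Q (by exact_mod_cast hQ) S hS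
end
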